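/- Fix a real number q with 0 < q < 1. For every Λ ∈ ℂ with 0 < |Λ| < 1, the global q-Whittaker function of type A₁ satisfies the asymptotic formula lim_{n → ∞} Λⁿ · q^{n²/4} · Ψ̃(q^{−n/2}, Λ) = θ(Λ) · ∏_{j=1}^∞ (1 − qʲ)^{−1} · ∏_{j=0}^∞ (1 − Λ² qʲ)^{−1}. (Theorem 4.2(ii) of the paper, formula (4.70), in the rank-one case.) -/

import Mathlib

/-!
With `(a; q)ₙ = ∏_{i < n} (1 - a qⁱ)`, the polynomial `P̄ₙ(Λ)` is the symmetric sum
`∑_{k + l = n} (q; q)ₙ / ((q; q)ₖ (q; q)ₗ) Λ^{k - l}`. Completing the square in the exponent of `q`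
therefore turns `Λⁿ q^{n²/4} Ψ̃(q^{-n/2}, Λ)` into the convolution
`∑_{m ≥ 0} q^{(n - m)²/4} Λ^{n - m} hₘ` of the theta series with
`hₘ = ∑_{k + l = m} Λ^{2k} / ((q; q)ₖ (q; q)ₗ)`, so by dominated convergence it tends to
`θ(Λ) · lim hₘ`. The same argument applied to the convolution `hₘ` gives
`lim hₘ = (q; q)_∞⁻¹ ∑ₖ Λ^{2k} / (q; q)ₖ`, and Euler's identity sums this last series.
-/

open scoped BigOperators
open Filter

noncomputable section

/-- Symmetric monomial `M_r(X) = X^r + X^{-r}` for `r ≥ 1`, `M_0 = 1`. -/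
def Msym (r : ℕ) (X : ℂ) : ℂ := if r = 0 then 1 else X ^ r + X⁻¹ ^ r

/-- Continuous q-Hermite Laurent polynomial (Macdonald polynomial of type A₁ at t = 0). -/
def PbarA1 (q : ℝ) (n : ℕ) (X : ℂ) : ℂ :=
  Msym n X + ∑ j ∈ Finset.Icc 1 (n / 2),
    (∏ i ∈ Finset.range j, (1 - (q : ℂ) ^ (n - i)) / (1 - (q : ℂ) ^ (i + 1))) *
      Msym (n - 2 * j) X

/-- Global q-Whittaker function of type A₁. -/
def whitA1 (q : ℝ) (X Λ : ℂ) : ℂ :=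
  ∑' n : ℕ, ((q ^ ((n : ℝ) ^ 2 / 4) : ℝ) : ℂ) * X ^ n * PbarA1 q n Λ /
    ∏ j ∈ Finset.Icc 1 n, (1 - (q : ℂ) ^ j)

/-- Theta function `θ(Λ) = ∑_{j ∈ ℤ} q^{j²/4} Λ^j`. -/
def thetaA1 (q : ℝ) (Λ : ℂ) : ℂ :=
  ∑' j : ℤ, ((q ^ ((j : ℝ) ^ 2 / 4) : ℝ) : ℂ) * Λ ^ j

/-- Rogers Laurent polynomial (symmetric Macdonald polynomial of type A₁). -/
def RogersA1 (q : ℝ) (t : ℂ) (n : ℕ) (X : ℂ) : ℂ :=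
  Msym n X + ∑ j ∈ Finset.Icc 1 (n / 2),
    (∏ i ∈ Finset.range j,
      ((1 - (q : ℂ) ^ (n - i)) * (1 - t * (q : ℂ) ^ i)) /
      ((1 - (q : ℂ) ^ (1 + i)) * (1 - t * (q : ℂ) ^ (n - i - 1)))) *
    Msym (n - 2 * j) X

/-- Global q,t-spherical function of type A₁, with `t = s²`. -/
def sphA1 (q s : ℝ) (X Λ : ℂ) : ℂ :=
  ∑' n : ℕ, (s : ℂ) ^ n * ((q ^ ((n : ℝ) ^ 2 / 4) : ℝ) : ℂ) *
    RogersA1 q ((s : ℂ) ^ 2) n X * RogersA1 q ((s : ℂ) ^ 2) n Λ *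
    ∏ i ∈ Finset.range n,
      ((1 - (s : ℂ) ^ 2 * (q : ℂ) ^ i) * (1 - (s : ℂ) ^ 2 * (q : ℂ) ^ (i + 1))) /
      ((1 - ((s : ℂ) ^ 2) ^ 2 * (q : ℂ) ^ i) * (1 - (q : ℂ) ^ (i + 1)))

/-- Macdonald truncated theta weight function of type A₁. -/
def muA1 (q : ℝ) (t : ℂ) (X : ℂ) : ℂ :=
  ∏' j : ℕ, ((1 - X ^ 2 * (q : ℂ) ^ j) * (1 - X⁻¹ ^ 2 * (q : ℂ) ^ (j + 1))) /
    ((1 - t * X ^ 2 * (q : ℂ) ^ j) * (1 - t * X⁻¹ ^ 2 * (q : ℂ) ^ (j + 1)))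

open Finset Topology

section Convolution

variable {R : Type*} [NormedRing R] [CompleteSpace R]

lemma tendsto_tsum_mul_of_norm_le {α β : Type*} {l : Filter α} {a L : β → R} {b : α → β → R}
    {C : ℝ} (ha : Summable fun j => ‖a j‖) (hb : ∀ n j, ‖b n j‖ ≤ C)
    (hL : ∀ j, Tendsto (fun n => b n j) l (𝓝 (L j))) :
    Tendsto (fun n => ∑' j, a j * b n j) l (𝓝 (∑' j, a j * L j)) :=
  tendsto_tsum_of_dominated_convergence (ha.mul_right C) (fun j => (hL j).const_mul (a j))
    (Eventually.of_forall fun n j => norm_mul_le_of_le le_rfl (hb n j))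

lemma tendsto_tsum_mul_ite {α β : Type*} {l : Filter α} {a : β → R} {b : ℕ → R} {L : R}
    {P : α → β → Prop} [∀ n j, Decidable (P n j)] {i : α → β → ℕ} (ha : Summable fun j => ‖a j‖)
    (hb : Tendsto b atTop (𝓝 L)) (hP : ∀ j, ∀ᶠ n in l, P n j)
    (hi : ∀ j, Tendsto (fun n => i n j) l atTop) :
    Tendsto (fun n => ∑' j, a j * if P n j then b (i n j) else 0) l (𝓝 ((∑' j, a j) * L)) := by
  obtain ⟨C, hC⟩ := (Metric.isBounded_range_of_tendsto b hb).exists_norm_le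
  rw [← ha.of_norm.tsum_mul_right]
  refine tendsto_tsum_mul_of_norm_le (C := C) ha (fun n j => ?_) fun j => ?_
  · split_ifs
    · exact hC _ ⟨i n j, rfl⟩
    · exact norm_zero.trans_le ((norm_nonneg _).trans (hC _ ⟨0, rfl⟩))
  · exact (hb.comp (hi j)).congr' ((hP j).mono fun n hn => (if_pos hn).symm)

lemma tendsto_sum_antidiagonal_mul {a b : ℕ → R} {L : R} (ha : Summable fun k => ‖a k‖)
    (hb : Tendsto b atTop (𝓝 L)) :
    Tendsto (fun n => ∑ p ∈ antidiagonal n, a p.1 * b p.2) atTop (𝓝 ((∑' k, a k) * L)) := by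
  have hsum (n : ℕ) : ∑ p ∈ antidiagonal n, a p.1 * b p.2 =
      ∑' k, a k * if k ≤ n then b (n - k) else 0 := by
    rw [tsum_eq_sum (s := range (n + 1)) fun k hk => by simp_all,
      Nat.sum_antidiagonal_eq_sum_range_succ fun i j => a i * b j]
    exact sum_congr rfl fun k hk => by rw [if_pos (mem_range_succ_iff.mp hk)]
  simp only [hsum]
  exact tendsto_tsum_mul_ite ha hb eventually_ge_atTop tendsto_sub_atTop_nat

lemma tendsto_tsum_sub_mul {a : ℤ → R} {b : ℕ → R} {L : R} (ha : Summable fun j => ‖a j‖)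
    (hb : Tendsto b atTop (𝓝 L)) :
    Tendsto (fun n : ℕ => ∑' m : ℕ, a (n - m) * b m) atTop (𝓝 ((∑' j, a j) * L)) := by
  have hsum (n : ℕ) : ∑' m : ℕ, a (n - m) * b m =
      ∑' j : ℤ, a j * if j ≤ n then b (n - j).toNat else 0 := by
    have hinj : Function.Injective fun m : ℕ => (n : ℤ) - m :=
      sub_right_injective.comp Nat.cast_injective
    rw [← hinj.tsum_eq]
    · simp
    · refine Function.support_subset_iff'.mpr fun j hj => ?_
      rw [if_neg fun hjn => hj ⟨(n - j).toNat, by dsimp only; omega⟩, mul_zero]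
  simp only [hsum]
  refine tendsto_tsum_mul_ite ha hb (fun j => ?_) fun j => ?_
  · exact tendsto_natCast_atTop_atTop.eventually_ge_atTop j
  · refine tendsto_atTop.mpr fun N => ?_
    filter_upwards [eventually_ge_atTop (N + j.toNat)] with n hn
    omega

end Convolution

lemma sum_antidiagonal_eq_sum_range_div_two {M : Type*} [AddCommMonoid M] (f : ℕ × ℕ → M)
    (n : ℕ) :
    ∑ p ∈ antidiagonal n, f p =
      ∑ j ∈ range (n / 2 + 1), if j = n - j then f (j, n - j) else f (j, n - j) + f (n - j, j) := by
  induction n using Nat.twoStepInduction generalizing f with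
  | zero => simp
  | one => simp [Nat.sum_antidiagonal_succ]
  | more n ih _ =>
    have hends : ∑ p ∈ antidiagonal (n + 2), f p =
        ∑ p ∈ antidiagonal n, f (p.1 + 1, p.2 + 1) + (f (0, n + 2) + f (n + 2, 0)) := by
      rw [Nat.sum_antidiagonal_succ, Nat.sum_antidiagonal_succ', ← add_assoc, add_comm]
    rw [hends, ih fun p => f (p.1 + 1, p.2 + 1), Nat.add_div_right n two_pos,
      sum_range_succ' _ (n / 2 + 1)]
    congr 1
    refine sum_congr rfl fun j hj => ?_
    have hj' : j ≤ n := by have := mem_range.mp hj; omega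
    have hsub : n + 2 - (j + 1) = n - j + 1 := by omega
    simp only [hsub, add_left_inj]

section Field

variable {K : Type*} [Field K]

/-- The finite `q`-Pochhammer symbol `(a; q)ₙ`. -/
def qPochhammer (a q : K) (n : ℕ) : K := ∏ i ∈ range n, (1 - a * q ^ i)

lemma qPochhammer_zero (a q : K) : qPochhammer a q 0 = 1 := prod_range_zero _

lemma qPochhammer_succ (a q : K) (n : ℕ) :
    qPochhammer a q (n + 1) = qPochhammer a q n * (1 - a * q ^ n) :=
  prod_range_succ _ n

lemma qPochhammer_self (q : K) (n : ℕ) : qPochhammer q q n = ∏ i ∈ range n, (1 - q ^ (i + 1)) := by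
  simp only [qPochhammer, pow_succ']

lemma qPochhammer_self_eq_prod_Icc (q : K) (n : ℕ) :
    qPochhammer q q n = ∏ j ∈ Icc 1 n, (1 - q ^ j) := by
  rw [qPochhammer_self, range_eq_Ico, prod_Ico_add' (fun j => 1 - q ^ j)]
  rfl

lemma prod_range_one_sub_pow_sub_mul_qPochhammer (q : K) {k n : ℕ} (hk : k ≤ n) :
    (∏ i ∈ range k, (1 - q ^ (n - i))) * qPochhammer q q (n - k) = qPochhammer q q n := by
  induction k with
  | zero => simp
  | succ k ih =>
    rw [← ih (by omega), prod_range_succ, show n - k = n - (k + 1) + 1 by omega, qPochhammer_succ,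
      ← pow_succ']
    ring

lemma prod_range_one_sub_pow_div_eq_qPochhammer {q : K} (hq : ∀ n, qPochhammer q q n ≠ 0)
    {k n : ℕ} (hk : k ≤ n) :
    ∏ i ∈ range k, (1 - q ^ (n - i)) / (1 - q ^ (i + 1)) =
      qPochhammer q q n * ((qPochhammer q q k)⁻¹ * (qPochhammer q q (n - k))⁻¹) := by
  rw [prod_div_distrib, ← qPochhammer_self, ← prod_range_one_sub_pow_sub_mul_qPochhammer q hk]
  field_simp [hq k, hq (n - k)]

end Field

section NormedField

variable {𝕜 : Type*} [NormedField 𝕜] {a q z : 𝕜}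

lemma norm_mul_pow_lt_one (hq : ‖q‖ ≤ 1) (ha : ‖a‖ < 1) (j : ℕ) : ‖a * q ^ j‖ < 1 := by
  rw [norm_mul, norm_pow]
  exact mul_lt_one_of_nonneg_of_lt_one_left (norm_nonneg a) ha (pow_le_one₀ (norm_nonneg q) hq)

lemma one_sub_mul_pow_ne_zero (hq : ‖q‖ ≤ 1) (ha : ‖a‖ < 1) (j : ℕ) : 1 - a * q ^ j ≠ 0 := by
  refine sub_ne_zero.mpr fun h => (norm_mul_pow_lt_one hq ha j).ne ?_
  rw [← h, norm_one]

lemma qPochhammer_self_ne_zero (hq : ‖q‖ < 1) (n : ℕ) : qPochhammer q q n ≠ 0 :=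
  prod_ne_zero_iff.mpr fun i _ => one_sub_mul_pow_ne_zero hq.le hq i

variable [CompleteSpace 𝕜]

lemma multipliable_inv_one_sub_mul_pow (hq : ‖q‖ < 1) (ha : ∀ j : ℕ, 1 - a * q ^ j ≠ 0) :
    Multipliable fun j : ℕ => (1 - a * q ^ j)⁻¹ := by
  have hsum : Summable fun j : ℕ => ‖-(a * q ^ j)‖ := by
    simpa only [norm_neg, norm_mul, norm_pow] using
      (summable_geometric_of_lt_one (norm_nonneg q) hq).mul_left ‖a‖
  simp only [sub_eq_add_neg] at ha ⊢
  exact (multipliable_one_add_of_summable hsum).inv₀ (tprod_one_add_ne_zero_of_summable ha hsum)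

lemma tendsto_inv_qPochhammer (hq : ‖q‖ < 1) (ha : ∀ j : ℕ, 1 - a * q ^ j ≠ 0) :
    Tendsto (fun n => (qPochhammer a q n)⁻¹) atTop (𝓝 (∏' j : ℕ, (1 - a * q ^ j)⁻¹)) := by
  simpa only [qPochhammer, prod_inv_distrib] using
    (multipliable_inv_one_sub_mul_pow hq ha).tendsto_prod_tprod_nat

lemma tendsto_inv_qPochhammer_self (hq : ‖q‖ < 1) :
    Tendsto (fun n => (qPochhammer q q n)⁻¹) atTop (𝓝 (∏' j : ℕ, (1 - q ^ (j + 1))⁻¹)) := by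
  simpa only [pow_succ'] using tendsto_inv_qPochhammer hq (one_sub_mul_pow_ne_zero hq.le hq)

lemma summable_norm_pow_mul_inv_qPochhammer (hq : ‖q‖ < 1) (hz : ‖z‖ < 1) :
    Summable fun k : ℕ => ‖z ^ k * (qPochhammer q q k)⁻¹‖ := by
  obtain ⟨C, hC⟩ :=
    (Metric.isBounded_range_of_tendsto _ (tendsto_inv_qPochhammer_self hq)).exists_norm_le
  refine ((summable_geometric_of_lt_one (norm_nonneg z) hz).mul_right C).of_nonneg_of_le
    (fun k => norm_nonneg _) fun k => ?_
  rw [norm_mul, norm_pow]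
  gcongr
  exact hC _ ⟨k, rfl⟩

lemma one_sub_mul_tsum_pow_mul_inv_qPochhammer (hq : ‖q‖ < 1) (hz : ‖z‖ < 1) :
    (1 - z) * ∑' k : ℕ, z ^ k * (qPochhammer q q k)⁻¹ =
      ∑' k : ℕ, (z * q) ^ k * (qPochhammer q q k)⁻¹ := by
  have hzq : ‖z * q‖ < 1 := by simpa only [pow_one] using norm_mul_pow_lt_one hq.le hz 1
  have hsum_z := (summable_norm_pow_mul_inv_qPochhammer hq hz).of_norm
  have hsum_zq := (summable_norm_pow_mul_inv_qPochhammer hq hzq).of_norm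
  have hterm (k : ℕ) : z ^ (k + 1) * (qPochhammer q q (k + 1))⁻¹ -
      (z * q) ^ (k + 1) * (qPochhammer q q (k + 1))⁻¹ = z * (z ^ k * (qPochhammer q q k)⁻¹) := by
    have hk := qPochhammer_self_ne_zero hq k
    have hfactor := one_sub_mul_pow_ne_zero hq.le hq k
    rw [qPochhammer_succ, mul_pow]
    field_simp
    ring
  have hdiff : ∑' k : ℕ, z ^ k * (qPochhammer q q k)⁻¹ -
      ∑' k : ℕ, (z * q) ^ k * (qPochhammer q q k)⁻¹ =
        z * ∑' k : ℕ, z ^ k * (qPochhammer q q k)⁻¹ := by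
    rw [← hsum_z.tsum_sub hsum_zq, (hsum_z.sub hsum_zq).tsum_eq_zero_add, ← tsum_mul_left]
    simp only [hterm, pow_zero, sub_self, zero_add]
  linear_combination hdiff

lemma tsum_pow_mul_inv_qPochhammer_eq_mul (hq : ‖q‖ < 1) (hz : ‖z‖ < 1) (n : ℕ) :
    ∑' k : ℕ, z ^ k * (qPochhammer q q k)⁻¹ =
      (qPochhammer z q n)⁻¹ * ∑' k : ℕ, (z * q ^ n) ^ k * (qPochhammer q q k)⁻¹ := by
  induction n with
  | zero => simp [qPochhammer_zero]
  | succ n ih =>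
    have hfactor := one_sub_mul_pow_ne_zero hq.le hz n
    rw [ih, qPochhammer_succ, pow_succ, ← mul_assoc z,
      ← one_sub_mul_tsum_pow_mul_inv_qPochhammer hq (norm_mul_pow_lt_one hq.le hz n),
      mul_inv, mul_assoc, inv_mul_cancel_left₀ hfactor]

theorem tsum_pow_mul_inv_qPochhammer (hq : ‖q‖ < 1) (hz : ‖z‖ < 1) :
    ∑' k : ℕ, z ^ k * (qPochhammer q q k)⁻¹ = ∏' j : ℕ, (1 - z * q ^ j)⁻¹ := by
  have htail : Tendsto (fun n : ℕ => ∑' k : ℕ, (z * q ^ n) ^ k * (qPochhammer q q k)⁻¹) atTop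
      (𝓝 1) := by
    have hlim := tendsto_tsum_mul_of_norm_le (C := 1) (b := fun n k => (q ^ n) ^ k)
      (summable_norm_pow_mul_inv_qPochhammer hq hz)
      (fun n k => by
        simpa only [norm_pow] using
          pow_le_one₀ (by positivity) (pow_le_one₀ (norm_nonneg q) hq.le))
      fun k => (tendsto_pow_atTop_nhds_zero_of_norm_lt_one hq).pow k
    rw [tsum_eq_single 0 fun k hk => by simp [hk]] at hlim
    simpa only [pow_zero, mul_one, one_mul, qPochhammer_zero, inv_one, mul_pow, mul_right_comm]
      using hlim
  have hlim := (tendsto_inv_qPochhammer hq (one_sub_mul_pow_ne_zero hq.le hz)).mul htail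
  simp only [← tsum_pow_mul_inv_qPochhammer_eq_mul hq hz, mul_one] at hlim
  exact tendsto_nhds_unique tendsto_const_nhds hlim

end NormedField

/-- The Rogers–Szegő polynomial `∑ₖ (q; q)ₙ / ((q; q)ₖ (q; q)ₙ₋ₖ) zᵏ` divided by `(q; q)ₙ`, the form
in which the continuous `q`-Hermite polynomials enter the Whittaker series. -/
def normalizedRogersSzego {K : Type*} [Field K] (q z : K) (n : ℕ) : K :=
  ∑ p ∈ antidiagonal n, z ^ p.1 * (qPochhammer q q p.1)⁻¹ * (qPochhammer q q p.2)⁻¹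

lemma tendsto_normalizedRogersSzego {𝕜 : Type*} [NormedField 𝕜] [CompleteSpace 𝕜] {q z : 𝕜}
    (hq : ‖q‖ < 1) (hz : ‖z‖ < 1) :
    Tendsto (normalizedRogersSzego q z) atTop
      (𝓝 ((∏' j : ℕ, (1 - q ^ (j + 1))⁻¹) * ∏' j : ℕ, (1 - z * q ^ j)⁻¹)) := by
  rw [mul_comm, ← tsum_pow_mul_inv_qPochhammer hq hz]
  exact tendsto_sum_antidiagonal_mul (b := fun k => (qPochhammer q q k)⁻¹)
    (summable_norm_pow_mul_inv_qPochhammer hq hz) (tendsto_inv_qPochhammer_self hq)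

lemma Msym_sub {k l : ℕ} (hkl : k ≤ l) (X : ℂ) :
    Msym (l - k) X =
      if k = l then X ^ ((k : ℤ) - l) else X ^ ((k : ℤ) - l) + X ^ ((l : ℤ) - k) := by
  rcases hkl.eq_or_lt with rfl | hlt
  · simp [Msym]
  · rw [Msym, if_neg (Nat.sub_ne_zero_of_lt hlt), if_neg hlt.ne, ← neg_sub (l : ℤ) k, zpow_neg,
      ← Nat.cast_sub hkl, zpow_natCast, inv_pow, add_comm]

lemma PbarA1_eq_sum_range (q : ℝ) (n : ℕ) (X : ℂ) :
    PbarA1 q n X = ∑ j ∈ range (n / 2 + 1),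
      (∏ i ∈ range j, (1 - (q : ℂ) ^ (n - i)) / (1 - (q : ℂ) ^ (i + 1))) * Msym (n - 2 * j) X := by
  rw [PbarA1, range_eq_Ico (a := n / 2 + 1), sum_eq_sum_Ico_succ_bot (Nat.succ_pos _)]
  simp only [range_zero, prod_empty, one_mul, mul_zero, Nat.sub_zero, zero_add]
  rfl

lemma PbarA1_eq_sum_antidiagonal {q : ℝ} (hq : ∀ n, qPochhammer (q : ℂ) q n ≠ 0) (n : ℕ) (X : ℂ) :
    PbarA1 q n X = qPochhammer (q : ℂ) q n * ∑ p ∈ antidiagonal n,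
      (qPochhammer (q : ℂ) q p.1)⁻¹ * (qPochhammer (q : ℂ) q p.2)⁻¹ * X ^ ((p.1 : ℤ) - p.2) := by
  rw [PbarA1_eq_sum_range, sum_antidiagonal_eq_sum_range_div_two, mul_sum]
  refine sum_congr rfl fun j hj => ?_
  have hj' : j ≤ n - j := by have := mem_range.mp hj; omega
  rw [prod_range_one_sub_pow_div_eq_qPochhammer hq (by omega), show n - 2 * j = n - j - j by omega,
    Msym_sub hj']
  split_ifs <;> ring

lemma pow_mul_PbarA1_div_qPochhammer {q : ℝ} (hq : ∀ n, qPochhammer (q : ℂ) q n ≠ 0) {X : ℂ}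
    (hX : X ≠ 0) (n : ℕ) :
    X ^ n * PbarA1 q n X / qPochhammer (q : ℂ) q n = normalizedRogersSzego (q : ℂ) (X ^ 2) n := by
  rw [PbarA1_eq_sum_antidiagonal hq, mul_left_comm, mul_div_cancel_left₀ _ (hq n), mul_sum,
    normalizedRogersSzego]
  refine sum_congr rfl fun p hp => ?_
  have hpow : X ^ n * X ^ ((p.1 : ℤ) - p.2) = (X ^ 2) ^ p.1 := by
    rw [← mem_antidiagonal.mp hp, ← pow_mul, ← zpow_natCast, ← zpow_natCast, ← zpow_add₀ hX]
    congr 1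
    push_cast
    ring
  rw [← hpow]
  ring

lemma summable_norm_rpow_sq_div_mul_zpow {q : ℝ} (hq0 : 0 < q) (hq1 : q < 1) {c : ℝ} (hc : 0 < c)
    {z : ℂ} (hz : z ≠ 0) :
    Summable fun j : ℤ => ‖((q ^ ((j : ℝ) ^ 2 / c) : ℝ) : ℂ) * z ^ j‖ := by
  -- Jacobi theta parameters with `q = exp (-π c · im τ)` and `‖z‖ = exp (-2π · im w)`.
  let τ : ℂ := ⟨0, -Real.log q / (c * Real.pi)⟩
  let w : ℂ := ⟨0, -Real.log ‖z‖ / (2 * Real.pi)⟩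
  have hτ : 0 < τ.im := div_pos (neg_pos.mpr (Real.log_neg hq0 hq1)) (by positivity)
  refine ((summable_jacobiTheta₂_term_iff w τ).mpr hτ).norm.congr fun j => ?_
  rw [norm_jacobiTheta₂_term, norm_mul, norm_zpow, Complex.norm_real, Real.norm_eq_abs,
    abs_of_pos (Real.rpow_pos_of_pos hq0 _), Real.rpow_def_of_pos hq0, ← Real.rpow_intCast,
    Real.rpow_def_of_pos (norm_pos_iff.mpr hz), ← Real.exp_add]
  congr 1
  simp only [τ, w]
  field_simp
  ring

lemma rpow_sq_div_four_mul_pow {q : ℝ} (hq0 : 0 < q) (n m : ℕ) :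
    q ^ ((n : ℝ) ^ 2 / 4) * (q ^ ((m : ℝ) ^ 2 / 4) * (q ^ (-(n : ℝ) / 2)) ^ m) =
      q ^ ((((n : ℤ) - (m : ℤ) : ℤ) : ℝ) ^ 2 / 4) := by
  rw [← Real.rpow_natCast (q ^ (-(n : ℝ) / 2)), ← Real.rpow_mul hq0.le, ← Real.rpow_add hq0,
    ← Real.rpow_add hq0]
  congr 1
  push_cast
  ring

lemma pow_mul_rpow_mul_whitA1_eq_tsum {q : ℝ} (hq0 : 0 < q)
    (hq : ∀ n, qPochhammer (q : ℂ) q n ≠ 0) {Λ : ℂ} (hΛ : Λ ≠ 0) (n : ℕ) :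
    Λ ^ n * ((q ^ ((n : ℝ) ^ 2 / 4) : ℝ) : ℂ) * whitA1 q (((q ^ (-(n : ℝ) / 2) : ℝ) : ℂ)) Λ =
      ∑' m : ℕ, ((q ^ ((((n : ℤ) - (m : ℤ) : ℤ) : ℝ) ^ 2 / 4) : ℝ) : ℂ) * Λ ^ ((n : ℤ) - m) *
        normalizedRogersSzego (q : ℂ) (Λ ^ 2) m := by
  rw [whitA1, ← tsum_mul_left]
  refine tsum_congr fun m => ?_
  have hΛm := pow_ne_zero m hΛ
  have hqm := hq m
  rw [← qPochhammer_self_eq_prod_Icc, ← pow_mul_PbarA1_div_qPochhammer hq hΛ,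
    ← rpow_sq_div_four_mul_pow hq0, zpow_sub₀ hΛ, zpow_natCast, zpow_natCast]
  push_cast
  field_simp

/-- asymptotic formula for the global q-Whittaker function of type A₁. -/
theorem whitA1_asymptotic_formula (q : ℝ) (hq0 : 0 < q) (hq1 : q < 1)
    (Λ : ℂ) (hΛ0 : Λ ≠ 0) (hΛ1 : ‖Λ‖ < 1) :
    Filter.Tendsto (fun n : ℕ =>
        Λ ^ n * ((q ^ ((n : ℝ) ^ 2 / 4) : ℝ) : ℂ) *
          whitA1 q (((q ^ (-(n : ℝ) / 2) : ℝ) : ℂ)) Λ)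
      Filter.atTop
      (nhds (thetaA1 q Λ * (∏' j : ℕ, (1 - (q : ℂ) ^ (j + 1))⁻¹) *
        ∏' j : ℕ, (1 - Λ ^ 2 * (q : ℂ) ^ j)⁻¹)) := by
  have hq : ‖(q : ℂ)‖ < 1 := by simpa [abs_of_pos hq0] using hq1
  have hΛ2 : ‖Λ ^ 2‖ < 1 := by
    rw [norm_pow]
    exact pow_lt_one₀ (norm_nonneg Λ) hΛ1 two_ne_zero
  simp only [pow_mul_rpow_mul_whitA1_eq_tsum hq0 (qPochhammer_self_ne_zero hq) hΛ0]
  have hlim := tendsto_tsum_sub_mul (summable_norm_rpow_sq_div_mul_zpow hq0 hq1 four_pos hΛ0)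
    (tendsto_normalizedRogersSzego hq hΛ2)
  rwa [← mul_assoc] at hlim

end
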